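/- Among the total degrees of vertices of all Fibonacci graphs on words of length n, the proportion of vertices of degree 2 tends to (7 − √5)/22 as n → ∞; that is, lim_{n→∞} ( Σ_{w ∈ F_{n,2}} deg₂(w) ) / ( Σ_{w ∈ F_{n,2}} ver(w) ) = (7 − √5)/22. -/

import Mathlib

open Finset Filter

/-- Number of `1`s in a binary word. -/
def wOnes (w : List Bool) : ℕ := w.count true

/-- Indicator of `w₁ = c` (first letter). -/
def indHead (c : Bool) (w : List Bool) : ℕ := if w.head? = some c then 1 else 0

/-- Indicator of `wₙ = c` (last letter). -/
def indLast (c : Bool) (w : List Bool) : ℕ := if w.getLast? = some c then 1 else 0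

/-- The set `F_{n,2}` of binary words of length `n` avoiding two consecutive `1`s. -/
def kbonWords (n k : ℕ) : Finset (Fin n → Bool) :=
  Finset.univ.filter (fun w => ¬ (List.replicate k true <:+: List.ofFn w))

/-- Number of vertices of the Fibonacci graph of `w`: `ver(w) = 2n + 2 + 2s(w)`. -/
def wVer (n : ℕ) (w : List Bool) : ℕ := 2 * n + 2 + 2 * wOnes w

/-- Number of degree-2 vertices: `deg₂(w) = 2 + 2s(w) + [w₁ = 0] + [wₙ = 0]`. -/
def wDeg2 (w : List Bool) : ℕ := 2 + 2 * wOnes w + indHead false w + indLast false w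

/-- Number of degree-4 vertices: `deg₄(w) = 2s(w) − [w₁ = 1] − [wₙ = 1]`. -/
def wDeg4 (w : List Bool) : ℕ := 2 * wOnes w - indHead true w - indLast true w

/-- Number of degree-3 vertices: `deg₃(w) = ver(w) − deg₂(w) − deg₄(w)`. -/
def wDeg3 (n : ℕ) (w : List Bool) : ℕ := wVer n w - wDeg2 w - wDeg4 w

/-!
A Fibonacci word of length `n + 2` is `0u` with `u` a Fibonacci word of length `n + 1`, or `10v`
with `v` one of length `n`. Hence there are `fib (n + 2)` words of length `n`, and their total
number of `1`s satisfies a Fibonacci recursion with an inhomogeneous Fibonacci term. Solving it,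
the proportion of `1`s among all letters tends to `p = (5 - √5) / 10`. Up to bounded errors,
`deg₂(w)` is `2s(w)` and `ver(w)` is `2n + 2s(w)`, so the proportion of vertices of degree 2 tends
to `2p / (2 + 2p) = (7 - √5) / 22`.
-/

open Topology Real goldenRatio

theorem sum_ofFn_succ {α M : Type*} [Fintype α] [AddCommMonoid M] (n : ℕ) (f : List α → M) :
    ∑ w : Fin (n + 1) → α, f (List.ofFn w) = ∑ a, ∑ w : Fin n → α, f (a :: List.ofFn w) := by
  rw [← (Fin.consEquiv fun _ => α).sum_comp, Fintype.sum_prod_type]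
  simp [Fin.consEquiv, List.ofFn_succ]

/-- Fibonacci words as lists of any length: binary words without two consecutive `1`s. The
condition is spelled exactly as in `kbonWords`. -/
abbrev IsFibWord (l : List Bool) : Prop := ¬ List.replicate 2 true <:+: l

namespace IsFibWord

theorem nil : IsFibWord [] := by
  simp [IsFibWord]

theorem singleton (b : Bool) : IsFibWord [b] := by
  simp [IsFibWord, List.replicate, List.infix_cons_iff]

theorem false_cons_iff (l : List Bool) : IsFibWord (false :: l) ↔ IsFibWord l := by
  simp [IsFibWord, List.replicate, List.infix_cons_iff]

theorem true_cons_false_cons_iff (l : List Bool) :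
    IsFibWord (true :: false :: l) ↔ IsFibWord l := by
  simp [IsFibWord, List.replicate, List.infix_cons_iff]

theorem not_true_cons_true_cons (l : List Bool) : ¬ IsFibWord (true :: true :: l) := by
  simp [IsFibWord, List.replicate, List.infix_cons_iff]

end IsFibWord

section Recursion

variable {M : Type*} [AddCommMonoid M] (f : List Bool → M)

theorem sum_kbonWords_two_eq_sum_ite (n : ℕ) :
    ∑ w ∈ kbonWords n 2, f (List.ofFn w) =
      ∑ w : Fin n → Bool, if IsFibWord (List.ofFn w) then f (List.ofFn w) else 0 :=
  sum_filter _ _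

theorem sum_kbonWords_zero_two : ∑ w ∈ kbonWords 0 2, f (List.ofFn w) = f [] := by
  rw [sum_kbonWords_two_eq_sum_ite]
  simp only [List.ofFn_zero, if_pos IsFibWord.nil, univ_unique, sum_singleton]

theorem sum_kbonWords_one_two :
    ∑ w ∈ kbonWords 1 2, f (List.ofFn w) = f [true] + f [false] := by
  rw [sum_kbonWords_two_eq_sum_ite, sum_ofFn_succ 0 fun l => if IsFibWord l then f l else 0]
  simp only [Fintype.sum_bool, List.ofFn_zero, if_pos (IsFibWord.singleton _), univ_unique,
    sum_singleton]

theorem sum_kbonWords_add_two_two (n : ℕ) :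
    ∑ w ∈ kbonWords (n + 2) 2, f (List.ofFn w) =
      ∑ w ∈ kbonWords n 2, f (true :: false :: List.ofFn w) +
        ∑ w ∈ kbonWords (n + 1) 2, f (false :: List.ofFn w) := by
  rw [sum_kbonWords_two_eq_sum_ite f,
    sum_kbonWords_two_eq_sum_ite (fun l => f (true :: false :: l)),
    sum_kbonWords_two_eq_sum_ite (fun l => f (false :: l)),
    sum_ofFn_succ (n + 1) fun l => if IsFibWord l then f l else 0, Fintype.sum_bool,
    sum_ofFn_succ n fun l => if IsFibWord (true :: l) then f (true :: l) else 0]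
  simp only [Fintype.sum_bool, IsFibWord.not_true_cons_true_cons, if_false, sum_const_zero,
    IsFibWord.true_cons_false_cons_iff, IsFibWord.false_cons_iff, zero_add]

end Recursion

theorem card_kbonWords_two (n : ℕ) : #(kbonWords n 2) = Nat.fib (n + 2) := by
  induction n using Nat.twoStepInduction with
  | zero => simpa using sum_kbonWords_zero_two fun _ => (1 : ℕ)
  | one => simpa [Nat.fib_add_two] using sum_kbonWords_one_two fun _ => (1 : ℕ)
  | more n ih₀ ih₁ =>
    have hrec : #(kbonWords (n + 2) 2) = #(kbonWords n 2) + #(kbonWords (n + 1) 2) := by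
      simpa using sum_kbonWords_add_two_two (fun _ => (1 : ℕ)) n
    rw [hrec, ih₀, ih₁, ← Nat.fib_add_two]

theorem card_kbonWords_two_pos (n : ℕ) : 0 < #(kbonWords n 2) := by
  rw [card_kbonWords_two]
  exact Nat.fib_pos.2 (by lia)

theorem sum_wOnes_kbonWords_add_two_two (n : ℕ) :
    ∑ w ∈ kbonWords (n + 2) 2, wOnes (List.ofFn w) =
      ∑ w ∈ kbonWords n 2, wOnes (List.ofFn w) + Nat.fib (n + 2) +
        ∑ w ∈ kbonWords (n + 1) 2, wOnes (List.ofFn w) := by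
  simpa [wOnes, sum_add_distrib, card_kbonWords_two] using sum_kbonWords_add_two_two wOnes n

theorem five_mul_sum_wOnes_kbonWords_two (n : ℕ) :
    5 * ∑ w ∈ kbonWords n 2, wOnes (List.ofFn w) =
      n * Nat.fib (n + 1) + 2 * (n + 1) * Nat.fib n := by
  induction n using Nat.twoStepInduction with
  | zero =>
    rw [sum_kbonWords_zero_two wOnes]
    simp [wOnes]
  | one =>
    rw [sum_kbonWords_one_two wOnes]
    simp [wOnes]
  | more n ih₀ ih₁ =>
    rw [sum_wOnes_kbonWords_add_two_two, mul_add, mul_add, ih₀, ih₁]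
    simp only [Nat.fib_add_two]
    ring

theorem tendsto_fib_div_fib_add_atTop (k : ℕ) :
    Tendsto (fun n => (Nat.fib n / Nat.fib (n + k) : ℝ)) atTop (𝓝 ((-ψ) ^ k)) := by
  induction k with
  | zero =>
    rw [pow_zero]
    refine tendsto_const_nhds.congr' ?_
    filter_upwards [eventually_gt_atTop 0] with n hn
    exact (div_self (by exact_mod_cast (Nat.fib_pos.2 hn).ne')).symm
  | succ k ih =>
    have hsucc := tendsto_fib_div_fib_succ_atTop.comp (tendsto_add_atTop_nat k)
    refine (ih.mul hsucc).congr' ?_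
    filter_upwards [eventually_gt_atTop 0] with n hn
    exact div_mul_div_cancel₀ (by exact_mod_cast (Nat.fib_pos.2 (by lia)).ne')

theorem tendsto_sum_wOnes_div_mul_card :
    Tendsto (fun n : ℕ => (∑ w ∈ kbonWords n 2, (wOnes (List.ofFn w) : ℝ)) /
      (n * #(kbonWords n 2))) atTop (𝓝 ((5 - √5) / 10)) := by
  have hsucc := tendsto_fib_div_fib_succ_atTop.comp (tendsto_add_atTop_nat 1)
  have hinv : Tendsto (fun n : ℕ => 1 + 1 / (n : ℝ)) atTop (𝓝 1) := by
    simpa using (tendsto_one_div_atTop_nhds_zero_nat (𝕜 := ℝ)).const_add 1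
  have hlim := (hsucc.add ((hinv.mul (tendsto_fib_div_fib_add_atTop 2)).const_mul 2)).div_const 5
  have hvalue : (-ψ + 2 * (1 * (-ψ) ^ 2)) / 5 = (5 - √5) / 10 := by
    rw [neg_sq, goldenConj_sq, goldenConj]
    ring
  rw [hvalue] at hlim
  refine hlim.congr' ?_
  filter_upwards [eventually_ne_atTop 0] with n hn
  have hfib : (Nat.fib (n + 2) : ℝ) ≠ 0 := by exact_mod_cast (Nat.fib_pos.2 (by lia)).ne'
  have hsum : ∑ w ∈ kbonWords n 2, (wOnes (List.ofFn w) : ℝ) =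
      (n * Nat.fib (n + 1) + 2 * (n + 1) * Nat.fib n) / 5 := by
    rw [eq_div_iff (by norm_num), mul_comm]
    exact_mod_cast five_mul_sum_wOnes_kbonWords_two n
  rw [hsum, card_kbonWords_two, Function.comp_apply]
  field_simp

theorem tendsto_sum_div_mul_card_of_abs_sub_le {β : Type*} {ι : β → Type*} {l : Filter β}
    {s : ∀ b, Finset (ι b)} {f g : ∀ b, ι b → ℝ} {a : β → ℝ} {C L : ℝ}
    (hfg : ∀ᶠ b in l, ∀ i ∈ s b, |f b i - g b i| ≤ C) (ha : Tendsto a l atTop)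
    (hg : Tendsto (fun b => (∑ i ∈ s b, g b i) / (a b * #(s b))) l (𝓝 L)) :
    Tendsto (fun b => (∑ i ∈ s b, f b i) / (a b * #(s b))) l (𝓝 L) := by
  have hbound : ∀ᶠ b in l, ‖(∑ i ∈ s b, f b i) / (a b * #(s b)) -
      (∑ i ∈ s b, g b i) / (a b * #(s b))‖ ≤ |C| / a b := by
    filter_upwards [hfg, ha.eventually_gt_atTop 0] with b hfg hb
    have hsum : |∑ i ∈ s b, (f b i - g b i)| ≤ #(s b) * |C| := by
      simpa using (abs_sum_le_sum_abs _ _).trans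
        (sum_le_card_nsmul _ _ |C| fun i hi => (hfg i hi).trans (le_abs_self C))
    rw [← sub_div, ← sum_sub_distrib, norm_eq_abs, abs_div,
      abs_of_nonneg (by positivity : 0 ≤ a b * #(s b))]
    refine div_le_of_le_mul₀ (by positivity) (by positivity) (hsum.trans_eq ?_)
    field_simp
  simpa using (squeeze_zero_norm' hbound (ha.const_div_atTop |C|)).add hg

theorem abs_wDeg2_sub_two_mul_wOnes_le (w : List Bool) :
    |(wDeg2 w : ℝ) - 2 * wOnes w| ≤ 4 := by
  have hlower : 2 * wOnes w ≤ wDeg2 w := by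
    unfold wDeg2
    lia
  have hupper : wDeg2 w ≤ 2 * wOnes w + 4 := by
    unfold wDeg2 indHead indLast
    split_ifs <;> lia
  rify at hlower hupper
  rw [abs_le]
  constructor <;> linarith

theorem tendsto_sum_wDeg2_div_mul_card :
    Tendsto (fun n : ℕ => (∑ w ∈ kbonWords n 2, (wDeg2 (List.ofFn w) : ℝ)) /
      (n * #(kbonWords n 2))) atTop (𝓝 ((5 - √5) / 5)) := by
  refine tendsto_sum_div_mul_card_of_abs_sub_le
    (.of_forall fun _ w _ => abs_wDeg2_sub_two_mul_wOnes_le (List.ofFn w))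
    tendsto_natCast_atTop_atTop ?_
  have hlim := tendsto_sum_wOnes_div_mul_card.const_mul 2
  rw [show 2 * ((5 - √5) / 10) = (5 - √5) / 5 by ring] at hlim
  simpa only [← mul_sum, mul_div_assoc] using hlim

theorem tendsto_sum_wVer_div_mul_card :
    Tendsto (fun n : ℕ => (∑ w ∈ kbonWords n 2, (wVer n (List.ofFn w) : ℝ)) /
      (n * #(kbonWords n 2))) atTop (𝓝 ((15 - √5) / 5)) := by
  have hdiff (n : ℕ) (w : List Bool) : |(wVer n w : ℝ) - (2 * n + 2 * wOnes w)| ≤ 2 := by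
    rw [abs_le]
    constructor <;> norm_num [wVer]
  refine tendsto_sum_div_mul_card_of_abs_sub_le
    (.of_forall fun n w _ => hdiff n (List.ofFn w)) tendsto_natCast_atTop_atTop ?_
  have hlim := (tendsto_sum_wOnes_div_mul_card.const_mul 2).const_add 2
  rw [show 2 + 2 * ((5 - √5) / 10) = (15 - √5) / 5 by ring] at hlim
  refine hlim.congr' ?_
  filter_upwards [eventually_gt_atTop 0] with n hn
  have hcard : (0 : ℝ) < #(kbonWords n 2) := by exact_mod_cast card_kbonWords_two_pos n
  rw [sum_add_distrib, sum_const, nsmul_eq_mul, ← mul_sum]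
  field_simp

theorem degree2_proportion :
    Tendsto
      (fun n : ℕ =>
        ((∑ w ∈ kbonWords n 2, (wDeg2 (List.ofFn w) : ℝ)) /
          (∑ w ∈ kbonWords n 2, (wVer n (List.ofFn w) : ℝ))))
      atTop (nhds ((7 - Real.sqrt 5) / 22)) := by
  have hsqrt : √5 < 5 := by
    rw [Real.sqrt_lt' (by norm_num)]
    norm_num
  have hpos : 0 < (15 - √5) / 5 := by linarith
  have hvalue : (5 - √5) / 5 / ((15 - √5) / 5) = (7 - √5) / 22 := by
    rw [div_eq_div_iff hpos.ne' (by norm_num)]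
    linarith [Real.sq_sqrt (show (0 : ℝ) ≤ 5 by norm_num)]
  rw [← hvalue]
  refine (tendsto_sum_wDeg2_div_mul_card.div tendsto_sum_wVer_div_mul_card hpos.ne').congr' ?_
  filter_upwards [eventually_gt_atTop 0] with n hn
  have hcard := card_kbonWords_two_pos n
  exact div_div_div_cancel_right₀ (by positivity) _ _
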